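/- arXiv:1501.00715 — 8 statements merged into one kernel-verified Lean document; each statement's English description precedes it below -/
import Mathlib

section
/- Let n, a, b be natural numbers with 1 ≤ a ≤ b ≤ n. Then there exists a finite list of natural numbers, each lying in the interval [a, b], whose sum equals n, if and only if a divides n, or b divides n, or n / a > n / b, where / denotes integer (floor) division. -/
/- Lists of `k` elements of `[a, b]` have exactly the sums between `k • a` and `k • b`. So `n` is a
sum of naturals in `[a, b]` iff `k * a ≤ n ≤ k * b` for some `k`. Such a `k` with `n < k * b`
satisfies `n / b < k ≤ n / a`; conversely, if `n / b < n / a`, then `k = n / a` works. -/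

section OrderedMonoid

variable {M : Type*} [AddCommMonoid M] [LinearOrder M] [IsOrderedCancelAddMonoid M]
  [ExistsAddOfLE M] {a b s : M}

theorem exists_add_eq_of_succ_nsmul_le_of_le_succ_nsmul {k : ℕ}
    (has : (k + 1) • a ≤ s) (hsb : s ≤ (k + 1) • b) :
    ∃ x t, (a ≤ x ∧ x ≤ b) ∧ (k • a ≤ t ∧ t ≤ k • b) ∧ x + t = s := by
  have hab : a ≤ b := le_of_nsmul_le_nsmul_right k.succ_ne_zero (has.trans hsb)
  rw [succ_nsmul'] at has hsb
  -- Take `x = a` if the other `k` summands can make up the rest, and all of these equal to `b`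
  -- otherwise.
  rcases le_total s (a + k • b) with hs | hs
  · obtain ⟨c, rfl⟩ := exists_add_of_le has
    rw [add_assoc] at hs ⊢
    exact ⟨a, k • a + c, ⟨le_rfl, hab⟩,
      ⟨le_of_add_le_add_left (has.trans_eq (add_assoc ..)), le_of_add_le_add_left hs⟩, rfl⟩
  · obtain ⟨c, rfl⟩ := exists_add_of_le hs
    rw [add_right_comm] at hs hsb ⊢
    exact ⟨a + c, k • b, ⟨le_of_add_le_add_right hs, le_of_add_le_add_right hsb⟩,
      ⟨nsmul_le_nsmul_right hab k, le_rfl⟩, rfl⟩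

theorem exists_list_length_eq_sum_eq_iff {k : ℕ} :
    (∃ l : List M, l.length = k ∧ (∀ x ∈ l, a ≤ x ∧ x ≤ b) ∧ l.sum = s) ↔
      k • a ≤ s ∧ s ≤ k • b := by
  constructor
  · rintro ⟨l, rfl, hl, rfl⟩
    exact ⟨l.card_nsmul_le_sum a fun x hx ↦ (hl x hx).1,
      l.sum_le_card_nsmul b fun x hx ↦ (hl x hx).2⟩
  · rintro ⟨has, hsb⟩
    induction k generalizing s with
    | zero =>
      rw [zero_nsmul] at has hsb
      exact ⟨[], rfl, List.forall_mem_nil _, le_antisymm has hsb⟩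
    | succ k ih =>
      obtain ⟨x, t, hx, ⟨hat, htb⟩, rfl⟩ :=
        exists_add_eq_of_succ_nsmul_le_of_le_succ_nsmul has hsb
      obtain ⟨l, rfl, hl, rfl⟩ := ih hat htb
      exact ⟨x :: l, List.length_cons, List.forall_mem_cons.2 ⟨hx, hl⟩, List.sum_cons⟩

end OrderedMonoid

theorem exists_mul_le_and_le_mul_iff {n a b : ℕ} (ha : 0 < a) (hab : a ≤ b) :
    (∃ k, k * a ≤ n ∧ n ≤ k * b) ↔ a ∣ n ∨ b ∣ n ∨ n / b < n / a := by
  have hb : 0 < b := ha.trans_le hab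
  constructor
  · rintro ⟨k, hka, hkb⟩
    rcases hkb.eq_or_lt with rfl | hkb
    · exact .inr (.inl (dvd_mul_left b k))
    · exact .inr (.inr (((Nat.div_lt_iff_lt_mul hb).2 hkb).trans_le
        ((Nat.le_div_iff_mul_le ha).2 hka)))
  · rintro (hdvd | hdvd | hlt)
    · obtain ⟨k, rfl⟩ := exists_eq_mul_left_of_dvd hdvd
      exact ⟨k, le_rfl, Nat.mul_le_mul_left k hab⟩
    · obtain ⟨k, rfl⟩ := exists_eq_mul_left_of_dvd hdvd
      exact ⟨k, Nat.mul_le_mul_left k hab, le_rfl⟩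
    · exact ⟨n / a, Nat.div_mul_le_self n a, ((Nat.div_lt_iff_lt_mul hb).1 hlt).le⟩

theorem stmt1_general (n a b : ℕ) (hn : 0 < n) (ha : 1 ≤ a) (hab : a ≤ b) :
    (∃ l : List ℕ, l ≠ [] ∧ (∀ x ∈ l, a ≤ x ∧ x ≤ b) ∧ l.sum = n) ↔
      (a ∣ n ∨ b ∣ n ∨ n / b < n / a) := by
  rw [← exists_mul_le_and_le_mul_iff ha hab]
  constructor
  · rintro ⟨l, -, hl, hsum⟩
    exact ⟨l.length, exists_list_length_eq_sum_eq_iff.1 ⟨l, rfl, hl, hsum⟩⟩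
  · rintro ⟨k, hk⟩
    obtain ⟨l, -, hl, rfl⟩ := exists_list_length_eq_sum_eq_iff.2 hk
    have l_ne_nil : l ≠ [] := by
      rintro rfl
      exact hn.ne' List.sum_nil
    exact ⟨l, l_ne_nil, hl, rfl⟩

/-- `n` players can be divided into (one or more) teams with sizes in `[a, b]`
iff `a ∣ n`, `b ∣ n`, or `n / a > n / b` (integer division). -/
theorem stmt1 (n a b : ℕ) (ha : 1 ≤ a) (hab : a ≤ b) (hbn : b ≤ n) :
    (∃ l : List ℕ, l ≠ [] ∧ (∀ x ∈ l, a ≤ x ∧ x ≤ b) ∧ l.sum = n) ↔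
      (a ∣ n ∨ b ∣ n ∨ n / b < n / a) :=
  stmt1_general n a b (ha.trans (hab.trans hbn)) ha hab
end

section
/- For the 6-agent team formation instance with utility table u(A,·)=(B:1,C:0,D:2,E:3,F:2), u(B,·)=(A:2,C:1,D:0,E:3,F:2), u(C,·)=(A:2,B:2,D:1,E:0,F:3), u(D,·)=(A:1,B:2,C:2,E:2,F:1), u(E,·)=(A:0,B:2,C:3,D:1,F:2), u(F,·)=(A:2,B:1,C:2,D:2,E:1), the maximin share guarantee for team formation is not satisfiable: there is no partition of the six agents into two disjoint teams of size 3 such that every agent i receives utility Σ_{j ∈ T(i)\{i}} u(i,j) at least equal to its maximin share value m(i), where m(i) is the maximum over all partitions Q into two size-3 teams of the minimum of Σ_{j ∈ T_Q(i)\{i}} u(i,j) and of Σ_{k ∈ T_Q(j)\{j}} u(i,k) over all agents j on the team of Q not containing i. -/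
/-- Utility table: agents A..F are `0..5`; diagonal entries are irrelevant (set to 0). -/
def u1 : Fin 6 → Fin 6 → ℝ :=
  ![![0, 1, 0, 2, 3, 2],
    ![2, 0, 1, 0, 3, 2],
    ![2, 2, 0, 1, 0, 3],
    ![1, 2, 2, 0, 2, 1],
    ![0, 2, 3, 1, 0, 2],
    ![2, 1, 2, 2, 1, 0]]

/-- The team (of the partition `{Q, Qᶜ}`) containing agent `i`. -/
def teamOf (Q : Finset (Fin 6)) (i : Fin 6) : Finset (Fin 6) :=
  if i ∈ Q then Q else Qᶜ

/-- The minimum, over all teams agent `i` could obtain by swapping positions with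
some agent `j` in partition `{Q, Qᶜ}` (its own team, or the team of any `j` on the
other team, with `j` removed), of the value of that team to `i`. -/
noncomputable def minShare (i : Fin 6) (Q : Finset (Fin 6)) : ℝ :=
  sInf {v : ℝ |
    v = ∑ k ∈ (teamOf Q i).erase i, u1 i k ∨
    ∃ j : Fin 6, teamOf Q j ≠ teamOf Q i ∧ v = ∑ k ∈ (teamOf Q j).erase j, u1 i k}

/-- Agent `i`'s maximin share value: the maximum over all partitions into two
size-3 teams of `minShare i`. -/
noncomputable def mms (i : Fin 6) : ℝ :=
  sSup {v : ℝ | ∃ Q : Finset (Fin 6), Q.card = 3 ∧ v = minShare i Q}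

/-!
Every agent can split the other five into two teammates worth `3` together and three opponents
worth `1`, `2`, `2`; each pair of those opponents is worth at least `3`, so every maximin share is
at least `3`.

Call the agents `A, …, F`. Around the cycle `A → C → E → A` each agent is worth `0` to its
predecessor, and two of the three are on a common team. An agent who has a teammate worth `0` needs
the third member to be worth `3`, which only `E` is to `A`, only `F` to `C` and only `C` to `E`.
Hence `C` and `E` are teammates in every case, so `C` forces the team `{C, E, F}`, and on the
remaining team `{A, B, D}` agent `B` gets only `2`.
-/

theorem exists_eq_insert_and_le_of_eq_zero {α M : Type*} [DecidableEq α] [AddCommMonoid M] [LE M]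
    {S : Finset α} {f : α → M} {c : M} {i z : α} (hS : S.card = 3) (hi : i ∈ S) (hz : z ∈ S)
    (hzi : z ≠ i) (hf : f z = 0) (hc : c ≤ ∑ k ∈ S.erase i, f k) :
    ∃ k, S = {i, z, k} ∧ c ≤ f k := by
  have hz' : z ∈ S.erase i := Finset.mem_erase.2 ⟨hzi, hz⟩
  have hcard : ((S.erase i).erase z).card = 1 := by
    rw [Finset.card_erase_of_mem hz', Finset.card_erase_of_mem hi, hS]
  obtain ⟨k, hk⟩ := Finset.card_eq_one.1 hcard
  refine ⟨k, ?_, ?_⟩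
  · rw [← hk, Finset.insert_erase hz', Finset.insert_erase hi]
  · rwa [← Finset.add_sum_erase _ f hz', hf, zero_add, hk, Finset.sum_singleton] at hc

section Teams

variable {T : Finset (Fin 6)} {i j z : Fin 6}

theorem mem_teamOf_self (T : Finset (Fin 6)) (i : Fin 6) : i ∈ teamOf T i := by
  by_cases hi : i ∈ T <;> simp [teamOf, hi]

theorem card_teamOf (hT : T.card = 3) (i : Fin 6) : (teamOf T i).card = 3 := by
  unfold teamOf
  split_ifs
  · exact hT
  · rw [Finset.card_compl, hT, Fintype.card_fin]

theorem teamOf_eq_of_mem (h : j ∈ teamOf T i) : teamOf T j = teamOf T i := by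
  by_cases hi : i ∈ T <;> simp_all [teamOf]

theorem teamOf_eq_compl_of_notMem (h : j ∉ teamOf T i) : teamOf T j = (teamOf T i)ᶜ := by
  by_cases hi : i ∈ T <;> simp_all [teamOf]

theorem teamOf_eq_or_eq_or_eq (T : Finset (Fin 6)) (a b c : Fin 6) :
    teamOf T a = teamOf T b ∨ teamOf T b = teamOf T c ∨ teamOf T c = teamOf T a := by
  by_cases ha : a ∈ T <;> by_cases hb : b ∈ T <;> by_cases hc : c ∈ T <;>
    simp [teamOf, ha, hb, hc]

theorem exists_teamOf_eq_of_u1_eq_zero {c : ℝ} (hT : T.card = 3)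
    (hc : c ≤ ∑ k ∈ (teamOf T i).erase i, u1 i k) (hzi : z ≠ i)
    (hteam : teamOf T z = teamOf T i) (hz : u1 i z = 0) :
    ∃ k, teamOf T i = {i, z, k} ∧ c ≤ u1 i k :=
  exists_eq_insert_and_le_of_eq_zero (card_teamOf hT i) (mem_teamOf_self T i)
    (hteam ▸ mem_teamOf_self T z) hzi hz hc

end Teams

section MaximinShare

variable {c : ℝ} {i : Fin 6} {Q : Finset (Fin 6)}

theorem le_minShare (hi : i ∈ Q) (hown : c ≤ ∑ k ∈ Q.erase i, u1 i k)
    (hother : ∀ j ∉ Q, c ≤ ∑ k ∈ Qᶜ.erase j, u1 i k) : c ≤ minShare i Q := by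
  have hteam : teamOf Q i = Q := if_pos hi
  refine le_csInf ⟨_, Or.inl rfl⟩ ?_
  rintro v (rfl | ⟨j, hj, rfl⟩)
  · rwa [hteam]
  · have hjQ : j ∉ Q := fun hjQ => hj ((if_pos hjQ).trans hteam.symm)
    rw [teamOf, if_neg hjQ]
    exact hother j hjQ

theorem minShare_le_mms (i : Fin 6) (hQ : Q.card = 3) : minShare i Q ≤ mms i := by
  refine le_csSup ((Set.finite_range (minShare i)).subset ?_).bddAbove ⟨Q, hQ, rfl⟩
  rintro _ ⟨Q', _, rfl⟩
  exact Set.mem_range_self Q'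

/-- For each agent `i`, the team containing `i` in a maximin split for `i`. Its other two members
are worth `3` together, and the agents outside it are worth `1`, `2` and `2`. -/
def maximinTeam : Fin 6 → Finset (Fin 6) :=
  ![{0, 2, 4}, {1, 3, 4}, {2, 4, 5}, {3, 0, 1}, {4, 0, 2}, {5, 0, 1}]

theorem mem_maximinTeam (i : Fin 6) : i ∈ maximinTeam i := by
  revert i; decide

theorem card_maximinTeam (i : Fin 6) : (maximinTeam i).card = 3 := by
  revert i; decide

theorem u1_self (i : Fin 6) : u1 i i = 0 := by
  fin_cases i <;> simp [u1]

theorem sum_u1 (i : Fin 6) : ∑ k, u1 i k = 8 := by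
  fin_cases i <;> norm_num [u1, Fin.sum_univ_succ]

theorem sum_maximinTeam_u1 (i : Fin 6) : ∑ k ∈ maximinTeam i, u1 i k = 3 := by
  fin_cases i <;> simp [maximinTeam, u1] <;> norm_num

theorem u1_le_two_of_notMem_maximinTeam {j : Fin 6} (hj : j ∉ maximinTeam i) : u1 i j ≤ 2 := by
  fin_cases i <;> fin_cases j <;> simp_all [maximinTeam, u1]

theorem three_le_minShare_maximinTeam (i : Fin 6) : 3 ≤ minShare i (maximinTeam i) := by
  refine le_minShare (mem_maximinTeam i) ?_ fun j hj => ?_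
  · rw [Finset.sum_erase _ (u1_self i), sum_maximinTeam_u1]
  · have hsplit := Finset.sum_add_sum_compl (maximinTeam i) (u1 i)
    have hpair := Finset.add_sum_erase (maximinTeam i)ᶜ (u1 i) (Finset.mem_compl.2 hj)
    linarith [sum_u1 i, sum_maximinTeam_u1 i, u1_le_two_of_notMem_maximinTeam hj]

theorem three_le_mms (i : Fin 6) : 3 ≤ mms i :=
  (three_le_minShare_maximinTeam i).trans (minShare_le_mms i (card_maximinTeam i))

end MaximinShare

section Unsatisfiability

variable {T : Finset (Fin 6)}

theorem three_le_u1_iff {i k : Fin 6} :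
    3 ≤ u1 i k ↔ (i = 0 ∨ i = 1) ∧ k = 4 ∨ i = 2 ∧ k = 5 ∨ i = 4 ∧ k = 2 := by
  fin_cases i <;> fin_cases k <;> norm_num [u1] <;> decide

theorem teamOf_two_eq_teamOf_four (hT : T.card = 3)
    (h : ∀ i, 3 ≤ ∑ j ∈ (teamOf T i).erase i, u1 i j) : teamOf T 2 = teamOf T 4 := by
  rcases teamOf_eq_or_eq_or_eq T 0 2 4 with h02 | h24 | h40
  · obtain ⟨k, hteam, hk⟩ :=
      exists_teamOf_eq_of_u1_eq_zero hT (h 0) (by decide) h02.symm (by simp [u1])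
    obtain rfl : k = 4 := by simpa [three_le_u1_iff] using hk
    have h4 : 4 ∈ teamOf T 0 := by simp [hteam]
    exact h02.symm.trans (teamOf_eq_of_mem h4).symm
  · exact h24
  · obtain ⟨k, hteam, hk⟩ :=
      exists_teamOf_eq_of_u1_eq_zero hT (h 4) (by decide) h40.symm (by simp [u1])
    obtain rfl : k = 2 := by simpa [three_le_u1_iff] using hk
    exact teamOf_eq_of_mem (by simp [hteam])

theorem teamOf_two_eq (hT : T.card = 3)
    (h : ∀ i, 3 ≤ ∑ j ∈ (teamOf T i).erase i, u1 i j) : teamOf T 2 = {2, 4, 5} := by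
  obtain ⟨k, hteam, hk⟩ := exists_teamOf_eq_of_u1_eq_zero hT (h 2) (by decide)
    (teamOf_two_eq_teamOf_four hT h).symm (by simp [u1])
  obtain rfl : k = 5 := by simpa [three_le_u1_iff] using hk
  exact hteam

theorem exists_sum_teamOf_lt_three (hT : T.card = 3) :
    ∃ i, ∑ j ∈ (teamOf T i).erase i, u1 i j < 3 := by
  by_contra! h
  have hC := teamOf_two_eq hT h
  have hB : teamOf T 1 = {0, 1, 3} := by
    rw [teamOf_eq_compl_of_notMem (i := 2) (by simp [hC]), hC]
    decide
  have hB_sum : ∑ j ∈ (teamOf T 1).erase 1, u1 1 j = 2 := by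
    rw [hB, Finset.sum_erase _ (u1_self 1)]
    simp [u1]
  linarith [h 1]

end Unsatisfiability

/-- The maximin share guarantee is not satisfiable for this instance: no partition
into two size-3 teams gives every agent at least its maximin share value. -/
theorem stmt4 :
    ¬ ∃ T : Finset (Fin 6), T.card = 3 ∧
      ∀ i : Fin 6, mms i ≤ ∑ j ∈ (teamOf T i).erase i, u1 i j := by
  rintro ⟨T, hT, hfair⟩
  obtain ⟨i, hi⟩ := exists_sum_teamOf_lt_three hT
  exact hi.not_ge ((three_le_mms i).trans (hfair i))
end

section
/- Consider the 4-agent team formation instance with agents {A,B,C,D}, required team size exactly 2, and utility table u(A,·)=(B:2,C:1,D:0), u(B,·)=(A:0,C:2,D:1), u(C,·)=(A:1,B:0,D:2), u(D,·)=(A:2,B:1,C:0). There do not exist a budget vector b : {A,B,C,D} → ℝ and a nonnegative price vector p : {A,B,C,D} → ℝ that induce exact market clearing; that is, there is no map D_m : {A,B,C,D} → {A,B,C,D} such that (i) D_m is an involution with no fixed points, (ii) for every agent i, p(D_m(i)) ≤ b(i), and (iii) for every agent i and every agent k ≠ i with p(k) ≤ b(i), u(i,k) ≤ u(i, D_m(i))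 (i.e., each agent is assigned its most-preferred affordable partner, and demands are reciprocal). -/
/-- Utility table: agents A..D are `0..3`; diagonal entries are irrelevant (set to 0). -/
def u6 : Fin 4 → Fin 4 → ℝ :=
  ![![0, 2, 1, 0],
    ![0, 0, 2, 1],
    ![1, 0, 0, 2],
    ![2, 1, 0, 0]]

/-!
A budget can keep an agent from a preferred partner only if that partner is more expensive than
the partner the agent gets. In this instance every agent `i` has the favorite partner `i + 1`, and
these favorites are pairwise distinct. If the market clears, then the assigned partners also
exhaust the agents, so among the favorites that are not obtained, one of maximal price is itself
assigned to someone, who misses a still more expensive favorite. Hence everybody gets their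
favorite; but `i ↦ i + 1` is not an involution on four agents.
-/

open Function

section Clearing

variable {N α β : Type*}

theorem eq_of_surjective_of_injective_of_forall_ne_lt {ι : Type*} [Finite ι] [Preorder α]
    {p : N → α} {f g : ι → N} (hf : Surjective f) (hg : Injective g)
    (hlt : ∀ i, f i ≠ g i → p (f i) < p (g i)) : f = g := by
  by_contra hfg
  obtain ⟨i, hi, hmax⟩ :=
    (Set.toFinite {i | f i ≠ g i}).exists_maximalFor (p ∘ g) _ (ne_iff.mp hfg)
  obtain ⟨j, hji⟩ := hf (g i)
  have hj : f j ≠ g j := by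
    intro h
    obtain rfl : i = j := hg (hji.symm.trans h)
    exact hi hji
  have hij : p (g i) < p (g j) := hji ▸ hlt j hj
  exact hij.not_ge (hmax hj hij.le)

/-- `D` is a demand function at budgets `b` and prices `p` when teams have size two: `D i` is a
most-preferred agent for `i` among the other agents that `i` can afford. Exact market clearing is
the additional requirement that `D` be an involution. -/
structure IsDemand [LE α] [LE β] (u : N → N → β) (b p : N → α) (D : N → N) : Prop where
  ne_self : ∀ i, D i ≠ i
  affordable : ∀ i, p (D i) ≤ b i
  optimal : ∀ i k, k ≠ i → p k ≤ b i → u i k ≤ u i (D i)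

/-- `f i` is the unique favorite partner of agent `i`, strictly preferred to every other agent.
The utility of an agent for itself is left unconstrained, since nobody is their own partner. -/
structure IsUniqueFavorite [LT β] (u : N → N → β) (f : N → N) : Prop where
  ne_self : ∀ i, f i ≠ i
  lt : ∀ i k, k ≠ i → k ≠ f i → u i k < u i (f i)

variable [LinearOrder α] [Preorder β] {u : N → N → β} {b p : N → α} {D f : N → N}

theorem IsDemand.price_lt_of_utility_lt (hD : IsDemand u b p D) {i k : N} (hki : k ≠ i)
    (hu : u i (D i) < u i k) : p (D i) < p k := by
  by_contra! hk
  exact (hD.optimal i k hki (hk.trans (hD.affordable i))).not_gt hu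

theorem IsDemand.eq_of_isUniqueFavorite [Finite N] (hD : IsDemand u b p D) (hsurj : Surjective D)
    (hf : IsUniqueFavorite u f) (hinj : Injective f) : D = f :=
  eq_of_surjective_of_injective_of_forall_ne_lt hsurj hinj fun i hi ↦
    hD.price_lt_of_utility_lt (hf.ne_self i) (hf.lt i (D i) (hD.ne_self i) hi)

theorem stmt6_general [Finite N] (hf : IsUniqueFavorite u f) (hinj : Injective f)
    (hinv : ¬ Involutive f) :
    ¬ ∃ (b p : N → α) (D : N → N), Involutive D ∧ IsDemand u b p D := by
  rintro ⟨b, p, D, hD, hdem⟩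
  exact hinv (hdem.eq_of_isUniqueFavorite hD.surjective hf hinj ▸ hD)

end Clearing

theorem isUniqueFavorite_u6_add_one : IsUniqueFavorite u6 (· + 1) where
  ne_self := by decide
  lt i k _ hk := by
    fin_cases i <;> fin_cases k <;> simp [u6] at hk ⊢

/-- With team size exactly 2, no budgets `b` and nonnegative prices `p` induce exact
market clearing: there is no fixed-point-free involution `Dm` (pairing of the agents)
such that each agent can afford its partner and each agent's partner is its
most-preferred affordable agent. -/
theorem stmt6 :
    ¬ ∃ (b p : Fin 4 → ℝ), (∀ i, 0 ≤ p i) ∧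
      ∃ Dm : Fin 4 → Fin 4,
        (∀ i, Dm (Dm i) = i) ∧
        (∀ i, Dm i ≠ i) ∧
        (∀ i, p (Dm i) ≤ b i) ∧
        (∀ i k, k ≠ i → p k ≤ b i → u6 i k ≤ u6 i (Dm i)) := by
  rintro ⟨b, p, -, D, hinv, hne, haff, hopt⟩
  exact stmt6_general isUniqueFavorite_u6_add_one (add_left_injective 1)
    (fun h ↦ absurd (h 0) (by decide)) ⟨b, p, D, hinv, hne, haff, hopt⟩
end

section
/- Let X be a compact convex subset of ℝ^d containing at least two points, and let f : X → X be any function mapping X into itself. Then there exists a point x* ∈ X such that x* lies in the convex hull of the set { y ∈ X | there exists a sequence (x_n) with x_n ∈ X, x_n ≠ x* for all n, x_n → x*, and f(x_n) → y }. -/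
open Filter

/-!
If `g` is Lipschitz and vanishes off a bounded open set `U`, then for small `t` the map
`x ↦ x + t • g x` is a bijection of `U` onto itself, so by change of variables the polynomial
`t ↦ ∫ x in U, det (1 + t • Dg x)` takes the value `vol U` near `0`, hence also at `t = 1`. For
`g x = r x - x` with `r` a smooth retraction of a ball onto its sphere the integrand at `t = 1`
vanishes, so no such `r` exists; this gives Brouwer's theorem for smooth maps. Fixed points of
smooth approximate selections then yield Kakutani's theorem for upper hemicontinuous set-valued
maps. For an arbitrary `f : X → X` the cluster sets `x ↦ clusterSet f X x` form such a map, since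
`X` is compact and has no isolated point, and in finite dimension their convex hulls are closed.
-/

open Set Metric MeasureTheory Module Topology
open scoped NNReal

section Determinant

open Polynomial

lemma exists_natDegree_le_eval_eq_det_one_add_smul {K V : Type*} [Field K] [AddCommGroup V]
    [Module K V] [FiniteDimensional K V] (A : V →ₗ[K] V) :
    ∃ p : K[X], p.natDegree ≤ finrank K V ∧ ∀ t, p.eval t = LinearMap.det (1 + t • A) := by
  let b := finBasis K V
  let M := LinearMap.toMatrix b b A
  refine ⟨((X : K[X]) • M.map C + (1 : Matrix _ _ K).map C).det, ?_, fun t ↦ ?_⟩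
  · simpa only [Fintype.card_fin] using natDegree_det_X_add_C_le M 1
  · have heval : ((X : K[X]) • M.map C + (1 : Matrix _ _ K).map C).map (eval t) = 1 + t • M := by
      ext i j
      simp [Matrix.one_apply, apply_ite, add_comm, mul_comm t (M i j)]
    rw [← coe_evalRingHom, RingHom.map_det, RingHom.mapMatrix_apply, coe_evalRingHom, heval,
      ← LinearMap.det_toMatrix b, map_add, map_smul, LinearMap.toMatrix_one]

lemma eventually_det_one_add_pos {E : Type*} [NormedAddCommGroup E] [NormedSpace ℝ E] :
    ∀ᶠ A : E →L[ℝ] E in 𝓝 0, 0 < (1 + A).det := by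
  have hcont : Continuous fun A : E →L[ℝ] E ↦ (1 + A).det :=
    ContinuousLinearMap.continuous_det.comp (continuous_const.add continuous_id)
  refine hcont.continuousAt.eventually (lt_mem_nhds ?_)
  simp [ContinuousLinearMap.det]

lemma integral_det_one_add_smul_eq_of_infinite {α E : Type*} [MeasurableSpace α] {μ : Measure α}
    [NormedAddCommGroup E] [NormedSpace ℝ E] [FiniteDimensional ℝ E] {A : α → E →L[ℝ] E}
    (hint : ∀ t : ℝ, Integrable (fun x ↦ (1 + t • A x).det) μ) {c : ℝ}
    (hc : {t : ℝ | ∫ x, (1 + t • A x).det ∂μ = c}.Infinite) (t : ℝ) :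
    ∫ x, (1 + t • A x).det ∂μ = c := by
  obtain ⟨s, hsc, hcard⟩ := hc.exists_subset_card_eq (finrank ℝ E + 1)
  have hs : s.Nonempty := Finset.card_pos.1 (by lia)
  have hdet (x : α) : (1 + t • A x).det =
      ∑ u ∈ s, (1 + u • A x).det * (Lagrange.basis s id u).eval t := by
    obtain ⟨p, hpdeg, hp⟩ := exists_natDegree_le_eval_eq_det_one_add_smul (A x : E →ₗ[ℝ] E)
    have hdeg : p.degree < s.card :=
      degree_le_natDegree.trans_lt (by rw [hcard]; exact_mod_cast Nat.lt_succ_of_le hpdeg)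
    have hinterp := congrArg (eval t) (Lagrange.eq_interpolate (injOn_id _) hdeg)
    simp only [Lagrange.interpolate_apply, eval_finsetSum, eval_mul, eval_C, hp, id] at hinterp
    exact hinterp
  have hbasis : ∑ u ∈ s, (Lagrange.basis s id u).eval t = 1 := by
    rw [← eval_finsetSum, Lagrange.sum_basis (injOn_id _) hs, eval_one]
  calc ∫ x, (1 + t • A x).det ∂μ
      = ∑ u ∈ s, (∫ x, (1 + u • A x).det ∂μ) * (Lagrange.basis s id u).eval t := by
        simp_rw [hdet, integral_finsetSum s fun u _ ↦ (hint u).mul_const _, integral_mul_const]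
    _ = ∑ u ∈ s, c * (Lagrange.basis s id u).eval t :=
        Finset.sum_congr rfl fun u hu ↦ by rw [hsc hu]
    _ = c := by rw [← Finset.mul_sum, hbasis, mul_one]

end Determinant

section LipschitzPerturbation

variable {E : Type*} [NormedAddCommGroup E] {K : ℝ≥0}

section CompleteSpace

variable [CompleteSpace E] {g : E → E}

lemma bijective_add_of_lipschitzWith_lt_one (hg : LipschitzWith K g) (hK : K < 1) :
    Function.Bijective fun x ↦ x + g x := by
  refine Function.bijective_iff_existsUnique _ |>.2 fun y ↦ ?_
  have hcontr : ContractingWith K fun x ↦ y - g x :=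
    ⟨hK, by simpa using (LipschitzWith.const y).sub hg⟩
  have hfixed (x : E) : x + g x = y ↔ Function.IsFixedPt (fun x ↦ y - g x) x := by
    rw [Function.IsFixedPt, sub_eq_iff_eq_add, eq_comm]
  exact ⟨hcontr.fixedPoint, (hfixed _).2 hcontr.fixedPoint_isFixedPt,
    fun x hx ↦ hcontr.fixedPoint_unique ((hfixed x).1 hx)⟩

lemma image_add_eq_of_lipschitzWith_lt_one {U : Set E} (hg : LipschitzWith K g) (hK : K < 1)
    (hzero : ∀ x ∉ U, g x = 0) : (fun x ↦ x + g x) '' U = U := by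
  have hcompl : (fun x ↦ x + g x) '' Uᶜ = Uᶜ :=
    (image_congr fun x hx ↦ by rw [hzero x hx, add_zero]).trans (image_id' _)
  rwa [image_compl_eq (bijective_add_of_lipschitzWith_lt_one hg hK), compl_inj_iff] at hcompl

end CompleteSpace

variable [NormedSpace ℝ E]

lemma segment_inter_frontier_nonempty {s : Set E} {x y : E} (hx : x ∈ s) (hy : y ∉ s) :
    (segment ℝ x y ∩ frontier s).Nonempty := by
  rw [frontier_eq_closure_inter_closure]
  exact isPreconnected_closed_iff.1 (convex_segment x y).isPreconnected (closure s) (closure sᶜ)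
    isClosed_closure isClosed_closure
    (fun z _ ↦ (em (z ∈ s)).imp (fun h ↦ subset_closure h) (fun h ↦ subset_closure h))
    ⟨x, left_mem_segment ℝ x y, subset_closure hx⟩ ⟨y, right_mem_segment ℝ x y, subset_closure hy⟩

lemma lipschitzWith_indicator_of_eq_zero_on_frontier {F : Type*} [SeminormedAddCommGroup F]
    {s : Set E} (hs : IsClosed s) {g : E → F} (hg : LipschitzOnWith K g s)
    (hzero : ∀ x ∈ frontier s, g x = 0) : LipschitzWith K (s.indicator g) := by
  have hcross {x y : E} (hx : x ∈ s) (hy : y ∉ s) : dist (g x) 0 ≤ K * dist x y := by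
    obtain ⟨z, hzxy, hz⟩ := segment_inter_frontier_nonempty hx hy
    calc dist (g x) 0 = dist (g x) (g z) := by rw [hzero z hz]
      _ ≤ K * dist x z := hg.dist_le_mul x hx z (hs.frontier_subset hz)
      _ ≤ K * dist x y := by
        gcongr
        linarith [dist_add_dist_of_mem_segment hzxy, dist_nonneg (x := z) (y := y)]
  refine LipschitzWith.of_dist_le_mul fun x y ↦ ?_
  by_cases hx : x ∈ s <;> by_cases hy : y ∈ s
  · simpa only [indicator_of_mem hx, indicator_of_mem hy] using hg.dist_le_mul x hx y hy
  · simpa only [indicator_of_mem hx, indicator_of_notMem hy] using hcross hx hy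
  · simpa only [indicator_of_notMem hx, indicator_of_mem hy, dist_comm] using hcross hy hx
  · simp only [indicator_of_notMem hx, indicator_of_notMem hy, dist_self]
    positivity

end LipschitzPerturbation

lemma integrable_comp_of_continuous_of_norm_le {α F G : Type*} [MeasurableSpace α]
    {μ : Measure α} [IsFiniteMeasure μ] [NormedAddCommGroup F] [ProperSpace F]
    [NormedAddCommGroup G] {φ : F → G} (hφ : Continuous φ) {A : α → F}
    (hA : AEStronglyMeasurable A μ) {C : ℝ} (hC : ∀ x, ‖A x‖ ≤ C) :
    Integrable (fun x ↦ φ (A x)) μ := by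
  obtain ⟨B, hB⟩ := (isCompact_closedBall (0 : F) C).exists_bound_of_continuousOn hφ.continuousOn
  exact .of_bound (hφ.comp_aestronglyMeasurable hA) B
    (.of_forall fun x ↦ hB _ (mem_closedBall_zero_iff.2 (hC x)))

section IntegralDeterminant

variable {E : Type*} [NormedAddCommGroup E] [NormedSpace ℝ E] [FiniteDimensional ℝ E]
  [MeasurableSpace E] [BorelSpace E] {μ : Measure E} [μ.IsAddHaarMeasure]
  {U : Set E} {K : ℝ≥0} {g : E → E}

lemma setIntegral_det_one_add_fderiv_of_lipschitzWith_lt_one (hU : IsOpen U)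
    (hg : LipschitzWith K g) (hK : K < 1) (hd : DifferentiableOn ℝ g U)
    (hzero : ∀ x ∉ U, g x = 0) (hpos : ∀ x ∈ U, 0 < (1 + fderiv ℝ g x).det) :
    ∫ x in U, (1 + fderiv ℝ g x).det ∂μ = μ.real U := by
  have hderiv : ∀ x ∈ U, HasFDerivWithinAt (fun x ↦ x + g x) (1 + fderiv ℝ g x) U x := fun x hx ↦
    ((hasFDerivAt_id x).add (hd.differentiableAt (hU.mem_nhds hx)).hasFDerivAt).hasFDerivWithinAt
  have hinj : InjOn (fun x ↦ x + g x) U :=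
    (bijective_add_of_lipschitzWith_lt_one hg hK).injective.injOn
  calc ∫ x in U, (1 + fderiv ℝ g x).det ∂μ
      = ∫ x in U, |(1 + fderiv ℝ g x).det| • (1 : ℝ) ∂μ :=
        setIntegral_congr_fun hU.measurableSet fun x hx ↦ by
          simp only [abs_of_pos (hpos x hx), smul_eq_mul, mul_one]
    _ = ∫ _ in (fun x ↦ x + g x) '' U, (1 : ℝ) ∂μ :=
        (integral_image_eq_integral_abs_det_fderiv_smul μ hU.measurableSet hderiv hinj
          (fun _ ↦ (1 : ℝ))).symm
    _ = μ.real U := by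
        rw [image_add_eq_of_lipschitzWith_lt_one hg hK hzero, setIntegral_const, smul_eq_mul,
          mul_one]

lemma eventually_setIntegral_det_one_add_smul_fderiv (hU : IsOpen U) (hg : LipschitzWith K g)
    (hd : DifferentiableOn ℝ g U) (hzero : ∀ x ∉ U, g x = 0) :
    ∀ᶠ t : ℝ in 𝓝 0, ∫ x in U, (1 + t • fderiv ℝ g x).det ∂μ = μ.real U := by
  obtain ⟨δ, hδ, hdet⟩ := Metric.eventually_nhds_iff.1 (eventually_det_one_add_pos (E := E))
  have hlt {c : ℝ} (hc : 0 < c) : ∀ᶠ t : ℝ in 𝓝 0, ‖t‖ * K < c :=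
    (by fun_prop : Continuous fun t : ℝ ↦ ‖t‖ * K).continuousAt.eventually
      (gt_mem_nhds (by simpa using hc))
  filter_upwards [hlt hδ, hlt one_pos] with t htδ ht1
  have hlip : LipschitzWith (‖t‖₊ * K) (t • g) := (lipschitzWith_smul t).comp hg
  have hsmul : ∀ x ∈ U, fderiv ℝ (t • g) x = t • fderiv ℝ g x := fun x hx ↦
    fderiv_const_smul (hd.differentiableAt (hU.mem_nhds hx)) t
  have hpos (x : E) : 0 < (1 + fderiv ℝ (t • g) x).det := hdet <| by
    rw [dist_zero_right]
    exact (norm_fderiv_le_of_lipschitz ℝ hlip).trans_lt (by simpa using htδ)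
  rw [← setIntegral_det_one_add_fderiv_of_lipschitzWith_lt_one hU hlip (by exact_mod_cast ht1)
    (hd.const_smul t) (fun x hx ↦ by simp [hzero x hx]) (fun x _ ↦ hpos x)]
  exact setIntegral_congr_fun hU.measurableSet fun x hx ↦ by simp only [hsmul x hx]

theorem setIntegral_det_one_add_fderiv_of_lipschitzWith (hU : IsOpen U) (hμU : μ U ≠ ⊤)
    (hg : LipschitzWith K g) (hd : DifferentiableOn ℝ g U) (hzero : ∀ x ∉ U, g x = 0) :
    ∫ x in U, (1 + fderiv ℝ g x).det ∂μ = μ.real U := by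
  have : IsFiniteMeasure (μ.restrict U) := isFiniteMeasure_restrict.2 hμU
  have hint (t : ℝ) : IntegrableOn (fun x ↦ (1 + t • fderiv ℝ g x).det) U μ :=
    integrable_comp_of_continuous_of_norm_le (φ := fun A : E →L[ℝ] E ↦ (1 + t • A).det)
      (ContinuousLinearMap.continuous_det.comp (by fun_prop))
      (measurable_fderiv ℝ g).aestronglyMeasurable (fun _ ↦ norm_fderiv_le_of_lipschitz ℝ hg)
  have hinf : {t : ℝ | ∫ x in U, (1 + t • fderiv ℝ g x).det ∂μ = μ.real U}.Infinite :=
    infinite_of_mem_nhds 0 (eventually_setIntegral_det_one_add_smul_fderiv hU hg hd hzero)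
  simpa only [one_smul] using integral_det_one_add_smul_eq_of_infinite hint hinf 1

end IntegralDeterminant

section SmoothBrouwer

section InnerProductSpace

variable {E : Type*} [NormedAddCommGroup E] [InnerProductSpace ℝ E] [FiniteDimensional ℝ E]

lemma det_fderiv_eq_zero_of_eventually_mem_sphere {r : E → E} {x c : E} {R : ℝ} (hR : R ≠ 0)
    (hd : DifferentiableAt ℝ r x) (hr : ∀ᶠ y in 𝓝 x, r y ∈ sphere c R) :
    (fderiv ℝ r x).det = 0 := by
  by_contra hdet
  have hunit : IsUnit (fderiv ℝ r x : E →ₗ[ℝ] E) :=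
    (LinearMap.isUnit_iff_isUnit_det _).2 (isUnit_iff_ne_zero.2 hdet)
  obtain ⟨v, hv⟩ := ((Module.End.isUnit_iff _).1 hunit).surjective (r x - c)
  have hconst : HasFDerivAt (fun y ↦ ‖r y - c‖ ^ 2) (0 : E →L[ℝ] ℝ) x :=
    (hasFDerivAt_const (R ^ 2) x).congr_of_eventuallyEq <| by
      filter_upwards [hr] with y hy
      rw [mem_sphere_iff_norm.1 hy]
  have hinner : inner ℝ (r x - c) (fderiv ℝ r x v) = 0 := by
    simpa [inner_sub_left] using
      DFunLike.congr_fun ((hd.hasFDerivAt.sub_const c).norm_sq.unique hconst) v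
  have hx : r x - c = 0 := by
    rw [← inner_self_eq_zero (𝕜 := ℝ)]
    nth_rw 2 [← hv]
    exact hinner
  exact hR (by rw [← mem_sphere_iff_norm.1 hr.self_of_nhds, hx, norm_zero])

theorem exists_mem_sphere_apply_ne_of_contDiff {r : E → E} {c : E} {R : ℝ} (hR : 0 < R)
    (hr : ContDiff ℝ 1 r) (hmaps : MapsTo r (ball c R) (sphere c R)) :
    ∃ x ∈ sphere c R, r x ≠ x := by
  by_contra! hfix
  borelize E
  let g := (closedBall c R).indicator fun x ↦ r x - x
  obtain ⟨K, hK⟩ := (hr.sub contDiff_id).locallyLipschitz.locallyLipschitzOn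
    |>.exists_lipschitzOnWith_of_compact (isCompact_closedBall c R)
  have hg : LipschitzWith K g :=
    lipschitzWith_indicator_of_eq_zero_on_frontier isClosed_closedBall hK fun x hx ↦
      sub_eq_zero.2 (hfix x (frontier_closedBall_subset_sphere hx))
  have hzero : ∀ x ∉ ball c R, g x = 0 := fun x hx ↦ indicator_apply_eq_zero.2 fun hx' ↦
    sub_eq_zero.2 (hfix x (le_antisymm hx' (not_lt.1 hx)))
  have hderiv : ∀ x ∈ ball c R, HasFDerivAt g (fderiv ℝ r x - 1) x := fun x hx ↦
    ((hr.differentiable one_ne_zero x).hasFDerivAt.sub (hasFDerivAt_id x)).congr_of_eventuallyEq <|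
      (eventuallyEq_of_mem (isOpen_ball.mem_nhds hx) fun _ hy ↦
        indicator_of_mem (ball_subset_closedBall hy) _)
  have hdet : ∀ x ∈ ball c R, (1 + fderiv ℝ g x).det = 0 := fun x hx ↦ by
    rw [(hderiv x hx).fderiv, add_sub_cancel]
    exact det_fderiv_eq_zero_of_eventually_mem_sphere hR.ne' (hr.differentiable one_ne_zero x)
      (eventually_of_mem (isOpen_ball.mem_nhds hx) hmaps)
  have hvol : ∫ x in ball c R, (1 + fderiv ℝ g x).det = volume.real (ball c R) :=
    setIntegral_det_one_add_fderiv_of_lipschitzWith isOpen_ball measure_ball_lt_top.ne hg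
      (fun x hx ↦ (hderiv x hx).differentiableAt.differentiableWithinAt) hzero
  rw [setIntegral_eq_zero_of_forall_eq_zero hdet] at hvol
  exact (ENNReal.toReal_pos (measure_ball_pos volume c hR).ne' measure_ball_lt_top.ne).ne hvol

lemma exists_isFixedPt_of_contDiff_of_range_subset_closedBall {h : E → E} (hh : ContDiff ℝ 1 h)
    {R : ℝ} (hR : 0 < R) (hrange : range h ⊆ closedBall 0 R) : ∃ x, Function.IsFixedPt h x := by
  by_contra! hfix
  let χ : ContDiffBump (0 : E) := ⟨R, R + 1, hR, lt_add_one R⟩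
  let u (x : E) : E := x - χ x • h x
  have hu : ContDiff ℝ 1 u := contDiff_id.sub (χ.contDiff.smul hh)
  have hu0 (x : E) : u x ≠ 0 := fun hx ↦ by
    have hxR : x ∈ closedBall 0 R := by
      rw [mem_closedBall_zero_iff, sub_eq_zero.1 hx, norm_smul, Real.norm_of_nonneg χ.nonneg]
      exact (mul_le_of_le_one_left (norm_nonneg _) χ.le_one).trans
        (mem_closedBall_zero_iff.1 (hrange (mem_range_self x)))
    have hχ : χ x = 1 := χ.one_of_mem_closedBall hxR
    refine hfix x (sub_eq_zero.1 ?_).symm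
    simpa only [u, hχ, one_smul] using hx
  have hu_sphere : ∀ x ∈ sphere 0 (R + 1), u x = x := fun x hx ↦ by
    simp only [u, χ.zero_of_le_dist (mem_sphere.1 hx).ge, zero_smul, sub_zero]
  obtain ⟨x, hx, hne⟩ := exists_mem_sphere_apply_ne_of_contDiff (c := (0 : E))
    (r := fun x ↦ ((R + 1) * ‖u x‖⁻¹) • u x) (by positivity : 0 < R + 1)
    ((contDiff_const.mul ((hu.norm ℝ hu0).inv fun x ↦ norm_ne_zero_iff.2 (hu0 x))).smul hu)
    fun x _ ↦ by
      have := norm_ne_zero_iff.2 (hu0 x)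
      rw [mem_sphere_zero_iff_norm, norm_smul, norm_mul, norm_inv, norm_norm,
        Real.norm_of_nonneg (by positivity), inv_mul_cancel_right₀ this]
  refine hne ?_
  rw [hu_sphere x hx, mem_sphere_zero_iff_norm.1 hx, mul_inv_cancel₀ (by positivity), one_smul]

end InnerProductSpace

theorem exists_isFixedPt_of_contDiff_of_isBounded_range {E : Type*} [NormedAddCommGroup E]
    [NormedSpace ℝ E] [FiniteDimensional ℝ E] {h : E → E} (hh : ContDiff ℝ 1 h)
    (hbdd : Bornology.IsBounded (range h)) : ∃ x, Function.IsFixedPt h x := by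
  let e : E ≃L[ℝ] EuclideanSpace ℝ (Fin (finrank ℝ E)) := toEuclidean
  have hsub : range (e ∘ h ∘ e.symm) ⊆ e '' range h := by
    rintro _ ⟨x, rfl⟩
    exact mem_image_of_mem e (mem_range_self _)
  obtain ⟨R, hR, hrange⟩ :=
    ((e.lipschitz.isBounded_image hbdd).subset hsub).exists_pos_norm_le
  obtain ⟨x, hx⟩ := exists_isFixedPt_of_contDiff_of_range_subset_closedBall
    (e.contDiff.comp (hh.comp e.symm.contDiff)) hR fun y hy ↦
      mem_closedBall_zero_iff.2 (hrange y hy)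
  exact ⟨e.symm x, e.injective (hx.trans (e.apply_symm_apply x).symm)⟩

end SmoothBrouwer

section Caratheodory

lemma convexHull_eq_biUnion_image_stdSimplex {𝕜 E : Type*} [Field 𝕜] [LinearOrder 𝕜]
    [IsStrictOrderedRing 𝕜] [AddCommGroup E] [Module 𝕜 E] [FiniteDimensional 𝕜 E] (s : Set E) :
    convexHull 𝕜 s = ⋃ n ∈ Iic (finrank 𝕜 E + 1),
      (fun p : (Fin n → 𝕜) × (Fin n → E) ↦ ∑ i, p.1 i • p.2 i) ''
        (stdSimplex 𝕜 (Fin n) ×ˢ univ.pi fun _ ↦ s) := by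
  apply Subset.antisymm
  · intro x hx
    obtain ⟨ι, _, z, w, hzs, hz, hw, hsum, rfl⟩ := eq_pos_convex_span_of_mem_convexHull hx
    let e := (Fintype.equivFin ι).symm
    have hcard : Fintype.card ι ≤ finrank 𝕜 E + 1 :=
      hz.card_le_finrank_succ.trans (Nat.succ_le_succ (Submodule.finrank_le _))
    exact mem_biUnion hcard ⟨(w ∘ e, z ∘ e),
      ⟨⟨fun i ↦ (hw (e i)).le, (e.sum_comp w).trans hsum⟩, fun i _ ↦ hzs (mem_range_self (e i))⟩,
      e.sum_comp fun i ↦ w i • z i⟩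
  · refine iUnion₂_subset fun n _ ↦ ?_
    rintro _ ⟨⟨w, z⟩, ⟨hw, hz⟩, rfl⟩
    exact (convex_convexHull 𝕜 s).sum_mem (fun i _ ↦ hw.1 i) hw.2
      fun i _ ↦ subset_convexHull 𝕜 s (hz i (mem_univ i))

lemma isCompact_convexHull {E : Type*} [AddCommGroup E] [Module ℝ E] [TopologicalSpace E]
    [ContinuousAdd E] [ContinuousSMul ℝ E] [FiniteDimensional ℝ E] {s : Set E}
    (hs : IsCompact s) : IsCompact (convexHull ℝ s) := by
  rw [convexHull_eq_biUnion_image_stdSimplex]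
  exact (finite_Iic _).isCompact_biUnion fun n _ ↦
    ((isCompact_stdSimplex ℝ (Fin n)).prod (isCompact_univ_pi fun _ ↦ hs)).image (by fun_prop)

end Caratheodory

section Kakutani

open scoped Manifold

variable {E : Type*} [NormedAddCommGroup E] [NormedSpace ℝ E] [FiniteDimensional ℝ E] {X : Set E}

lemma exists_mem_convexHull_image_inter_ball (hX : IsCompact X) (hconv : Convex ℝ X)
    (hne : X.Nonempty) {g : E → E} (hg : MapsTo g X X) {ε : ℝ} (hε : 0 < ε) :
    ∃ z ∈ X, z ∈ convexHull ℝ (g '' (X ∩ ball z ε)) := by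
  -- Adding `infDist z X` to the radius makes `t z` nonempty for every `z` in the whole space, so
  -- that a smooth selection of `t` is a self-map of `E` and no retraction onto `X` is needed.
  let t (z : E) : Set E := convexHull ℝ (g '' (X ∩ ball z (infDist z X + ε)))
  have htX (z : E) : t z ⊆ X :=
    convexHull_min ((image_mono inter_subset_left).trans hg.image_subset) hconv
  have hlocal (x : E) : ∃ c, ∀ᶠ y in 𝓝 x, c ∈ t y := by
    obtain ⟨p, hp, hxp⟩ := (infDist_lt_iff hne).1 (lt_add_of_pos_right (infDist x X) hε)
    have hnear : ∀ᶠ y in 𝓝 x, dist p y < infDist y X + ε :=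
      (continuous_const.dist continuous_id).continuousAt.eventually_lt
        ((continuous_infDist_pt X).add continuous_const).continuousAt (by rwa [id, dist_comm])
    exact ⟨g p, hnear.mono fun y hy ↦ subset_convexHull ℝ _ (mem_image_of_mem g ⟨hp, hy⟩)⟩
  obtain ⟨h, hh⟩ := exists_contMDiffMap_forall_mem_convex_of_local_const (n := 1) 𝓘(ℝ, E)
    (fun z ↦ convex_convexHull ℝ _) hlocal
  have hsmooth : ContDiff ℝ 1 h := by exact_mod_cast h.contMDiff.contDiff
  obtain ⟨z, hz⟩ := exists_isFixedPt_of_contDiff_of_isBounded_range hsmooth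
    (hX.isBounded.subset (range_subset_iff.2 fun x ↦ htX x (hh x)))
  have hzt : z ∈ t z := by simpa only [hz.eq] using hh z
  refine ⟨z, htX z hzt, ?_⟩
  simpa only [t, infDist_zero_of_mem (htX z hzt), zero_add] using hzt

theorem exists_mem_closure_convexHull_of_upperHemicontinuousOn (hX : IsCompact X)
    (hconv : Convex ℝ X) (hne : X.Nonempty) {Φ : E → Set E} (hΦ : UpperHemicontinuousOn Φ X)
    (hΦX : ∀ x ∈ X, (Φ x ∩ X).Nonempty) : ∃ x ∈ X, x ∈ closure (convexHull ℝ (Φ x)) := by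
  choose! g hg using hΦX
  have happrox (n : ℕ) : ∃ z ∈ X, z ∈ convexHull ℝ (g '' (X ∩ ball z (1 / (n + 1)))) :=
    exists_mem_convexHull_image_inter_ball hX hconv hne (fun x hx ↦ (hg x hx).2)
      Nat.one_div_pos_of_nat
  choose z hzX hz using happrox
  obtain ⟨x, hx, φ, hφ, hlim⟩ := hX.tendsto_subseq hzX
  refine ⟨x, hx, ?_⟩
  rw [closure_eq_iInter_cthickening]
  refine mem_iInter₂.2 fun η hη ↦ closure_thickening_subset_cthickening η _ ?_
  have hnear : ∀ᶠ p in 𝓝[X] x, Φ p ⊆ thickening η (convexHull ℝ (Φ x)) :=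
    (hΦ.upperHemicontinuousWithinAt hx).forall_isOpen _ isOpen_thickening
      ((subset_convexHull ℝ _).trans (self_subset_thickening hη _))
  obtain ⟨δ, hδ, hball⟩ := mem_nhdsWithin_iff.1 hnear
  have hradius : Tendsto (fun n ↦ 1 / (φ n + 1 : ℝ)) atTop (𝓝 0) :=
    tendsto_one_div_add_atTop_nhds_zero_nat.comp hφ.tendsto_atTop
  refine mem_closure_of_tendsto hlim ?_
  filter_upwards [hlim (ball_mem_nhds x (half_pos hδ)), hradius.eventually_lt_const (half_pos hδ)]
    with n hdist hrad
  refine convexHull_min ?_ ((convex_convexHull ℝ (Φ x)).thickening η) (hz (φ n))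
  rintro _ ⟨p, ⟨hpX, hp⟩, rfl⟩
  have hpx : p ∈ ball x δ := by
    have hzx : dist (z (φ n)) x < δ / 2 := hdist
    exact ball_subset_ball' (by linarith) hp
  exact hball ⟨hpx, hpX⟩ (hg p hpX).1

end Kakutani

section ClusterSet

variable {α β : Type*} [TopologicalSpace α] [TopologicalSpace β] {f : α → β} {s : Set α} {x : α}
  {K : Set β} {y : β}

/-- The cluster set of `f` at `x` along `s`: all limit values of `f` at `x` along `s`, where the
point `x` itself is excluded from the approach. -/
def clusterSet (f : α → β) (s : Set α) (x : α) : Set β :=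
  {y | MapClusterPt y (𝓝[s \ {x}] x) f}

lemma isClosed_clusterSet : IsClosed (clusterSet f s x) :=
  isClosed_setOfPred_clusterPt

lemma clusterSet_subset (hK : IsClosed K) (hf : ∀ᶠ p in 𝓝[s \ {x}] x, f p ∈ K) :
    clusterSet f s x ⊆ K :=
  fun _ hy ↦ hK.mem_of_mapClusterPt hy hf

lemma inter_clusterSet_nonempty (hK : IsCompact K) (hf : ∀ᶠ p in 𝓝[s \ {x}] x, f p ∈ K)
    (hx : AccPt x (𝓟 s)) : (clusterSet f s x ∩ K).Nonempty := by
  have := accPt_principal_iff_nhdsWithin.1 hx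
  obtain ⟨y, hyK, hy⟩ := hK.exists_mapClusterPt (u := f) (tendsto_principal.2 hf)
  exact ⟨y, hy, hyK⟩

lemma upperHemicontinuousOn_clusterSet [T1Space α] [RegularSpace β] (hK : IsCompact K)
    (hKc : IsClosed K) (hf : MapsTo f s K) : UpperHemicontinuousOn (clusterSet f s) s := by
  refine .of_forall_isOpen fun x _ u hu hxu ↦ ?_
  have hfK (p : α) : ∀ᶠ q in 𝓝[s \ {p}] p, f q ∈ K :=
    eventually_mem_nhdsWithin.mono fun q hq ↦ hf hq.1
  obtain ⟨v, hv, hxv, hvu⟩ := (hK.of_isClosed_subset isClosed_clusterSet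
    (clusterSet_subset hKc (hfK x))).exists_isOpen_closure_subset (hu.mem_nhdsSet.2 hxu)
  have hfv : ∀ᶠ p in 𝓝[s \ {x}] x, f p ∈ v :=
    (hK.tendsto_nhdsSet_of_mapClusterPt (hfK x) fun _ _ hy ↦ hy) (hv.mem_nhdsSet.2 hxv)
  have hpunctured : ∀ᶠ p in 𝓝[s \ {x}] x, clusterSet f s p ⊆ u := by
    filter_upwards [eventually_eventually_nhdsWithin.2 hfv, eventually_mem_nhdsWithin] with p hp hpx
    refine (clusterSet_subset isClosed_closure ?_).trans hvu
    have hle : 𝓝[s \ {p}] p ≤ 𝓝[s \ {x}] p :=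
      (nhdsWithin_mono p sdiff_subset).trans_eq (Ne.nhdsWithin_sdiff_singleton hpx.2 s).symm
    exact (hp.filter_mono hle).mono fun q hq ↦ subset_closure hq
  have hinsert : ∀ᶠ p in 𝓝[insert x (s \ {x})] x, clusterSet f s p ⊆ u :=
    mem_nhdsWithin_insert.2 ⟨hxu, hpunctured⟩
  rw [insert_sdiff_singleton] at hinsert
  exact hinsert.filter_mono (nhdsWithin_mono x (subset_insert x s))

lemma exists_seq_of_mem_clusterSet [FirstCountableTopology α] [FirstCountableTopology β]
    (hy : y ∈ clusterSet f s x) :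
    ∃ xs : ℕ → α, (∀ n, xs n ∈ s) ∧ (∀ n, xs n ≠ x) ∧ Tendsto xs atTop (𝓝 x) ∧
      Tendsto (fun n ↦ f (xs n)) atTop (𝓝 y) := by
  have hne : (𝓝 x ⊓ comap f (𝓝 y) ⊓ 𝓟 (s \ {x})).NeBot := by
    have : (𝓝 y ⊓ map f (𝓝[s \ {x}] x)).NeBot := hy
    rwa [← Filter.push_pull', map_neBot_iff, nhdsWithin, ← inf_assoc, inf_comm (comap f _)] at this
  obtain ⟨xs, hlim, hxs⟩ := exists_seq_forall_of_frequently (frequently_mem_iff_neBot.2 hne)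
  rw [tendsto_inf, tendsto_comap_iff] at hlim
  exact ⟨xs, fun n ↦ (hxs n).1, fun n ↦ (hxs n).2, hlim.1, hlim.2⟩

end ClusterSet

theorem stmt7_general {E : Type*} [NormedAddCommGroup E] [NormedSpace ℝ E]
    [FiniteDimensional ℝ E] {X : Set E} (hcomp : IsCompact X) (hconv : Convex ℝ X)
    (htwo : X.Nontrivial) {f : E → E} (hf : MapsTo f X X) :
    ∃ x ∈ X, x ∈ convexHull ℝ {y : E | y ∈ X ∧ ∃ xs : ℕ → E, (∀ n, xs n ∈ X) ∧ (∀ n, xs n ≠ x) ∧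
      Tendsto xs atTop (𝓝 x) ∧ Tendsto (fun n ↦ f (xs n)) atTop (𝓝 y)} := by
  have hperfect : Preperfect X := hconv.isPreconnected.preperfect_of_nontrivial htwo
  have hfX (x : E) : ∀ᶠ p in 𝓝[X \ {x}] x, f p ∈ X :=
    eventually_mem_nhdsWithin.mono fun p hp ↦ hf hp.1
  have hsub (x : E) : clusterSet f X x ⊆ X := clusterSet_subset hcomp.isClosed (hfX x)
  have hcompact (x : E) : IsCompact (convexHull ℝ (clusterSet f X x)) :=
    isCompact_convexHull (hcomp.of_isClosed_subset isClosed_clusterSet (hsub x))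
  obtain ⟨x, hx, hmem⟩ := exists_mem_closure_convexHull_of_upperHemicontinuousOn hcomp hconv
    htwo.nonempty (upperHemicontinuousOn_clusterSet hcomp hcomp.isClosed hf) fun x hx ↦
      inter_clusterSet_nonempty hcomp (hfX x) (hperfect x hx)
  rw [(hcompact x).isClosed.closure_eq] at hmem
  refine ⟨x, hx, convexHull_mono ?_ hmem⟩
  exact fun y hy ↦ ⟨hsub x hy, exists_seq_of_mem_clusterSet hy⟩

/-- Cromme–Diener-style fixed point result: for any compact convex `X ⊆ ℝ^d` with at
least two points and any self-map `f` of `X` (no continuity assumed), there is a point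
`x*` of `X` lying in the convex hull of the set of limit values `y` of `f` along
sequences in `X \ {x*}` converging to `x*`. -/
theorem stmt7 (d : ℕ) (X : Set (EuclideanSpace ℝ (Fin d)))
    (hcomp : IsCompact X) (hconv : Convex ℝ X)
    (htwo : ∃ x ∈ X, ∃ y ∈ X, x ≠ y)
    (f : EuclideanSpace ℝ (Fin d) → EuclideanSpace ℝ (Fin d))
    (hf : ∀ x ∈ X, f x ∈ X) :
    ∃ x ∈ X, x ∈ convexHull ℝ {y : EuclideanSpace ℝ (Fin d) | y ∈ X ∧
      ∃ xs : ℕ → EuclideanSpace ℝ (Fin d),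
        (∀ n, xs n ∈ X) ∧ (∀ n, xs n ≠ x) ∧
        Tendsto xs atTop (nhds x) ∧
        Tendsto (fun n => f (xs n)) atTop (nhds y)} := by
  exact stmt7_general hcomp hconv htwo hf
end

section
/- Let n ≥ 1 be a natural number, let b̄ > 0, and let ε be a real number with 0 ≤ ε and (n−1)·(1+ε) ≤ n. Let p̃ be a real number with −1 ≤ p̃ ≤ 1 + b̄, let t = min(max(p̃, 0), b̄) be its truncation to [0, b̄], let D be a natural number with D ≤ n − 1, and let U ∈ {0, 1}. Then the updated price f = t + ((1 + ε − (ε/b̄)·t)·D − U)/n satisfies −1 ≤ f ≤ 1 + b̄. -/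
/-!
The scaled demand `(1 + ε - (ε / b) * t) * D` is affine in the truncated price `t ∈ [0, b]`, running
from `(1 + ε) * D` at `t = 0` to `D` at `t = b`. Since `D ≤ n - 1`, the bound on `ε` puts both
end values in `[0, n]`, so by convexity the scaled demand always lies there. Subtracting
`U ∈ [0, 1]` and dividing by `n` leaves an adjustment of absolute value at most `1`, hence the
update of `t` stays in `[-1, 1 + b]`.
-/

section PriceUpdate

open Set

variable {K : Type*} [Field K] [LinearOrder K] [IsStrictOrderedRing K] {b ε t n D U : K}

theorem one_add_sub_div_mul_mul_mem_of_convex {s : Set K} (hs : Convex K s) (hb : 0 < b)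
    (ht : t ∈ Icc 0 b) (h_zero : (1 + ε) * D ∈ s) (h_top : D ∈ s) :
    (1 + ε - ε / b * t) * D ∈ s := by
  have h_weight : t / b ≤ 1 := (div_le_one hb).2 ht.2
  have h_interp : (1 + ε - ε / b * t) * D = (1 - t / b) * ((1 + ε) * D) + t / b * D := by
    field_simp
    ring
  rw [h_interp]
  exact hs h_zero h_top (sub_nonneg.2 h_weight) (div_nonneg ht.1 hb.le) (sub_add_cancel _ _)

theorem abs_sub_div_le_one (hn : 0 < n) {x y : K} (hx : x ∈ Icc 0 n) (hy : y ∈ Icc 0 n) :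
    |(x - y) / n| ≤ 1 := by
  rw [abs_div, abs_of_pos hn, div_le_one hn]
  exact abs_sub_le_of_nonneg_of_le hx.1 hx.2 hy.1 hy.2

theorem one_add_mul_mem_Icc (hε : -1 ≤ ε) (hε' : (n - 1) * (1 + ε) ≤ n)
    (hD : D ∈ Icc 0 (n - 1)) : (1 + ε) * D ∈ Icc 0 n := by
  have h_coeff : 0 ≤ 1 + ε := by linarith
  refine ⟨mul_nonneg h_coeff hD.1, ?_⟩
  calc (1 + ε) * D ≤ (1 + ε) * (n - 1) := mul_le_mul_of_nonneg_left hD.2 h_coeff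
    _ = (n - 1) * (1 + ε) := mul_comm _ _
    _ ≤ n := hε'

theorem stmt8_general (hb : 0 < b) (hε : -1 ≤ ε) (hε' : (n - 1) * (1 + ε) ≤ n) (p : K)
    (hD : D ∈ Icc 0 (n - 1)) (hU : U ∈ Icc 0 1) :
    min (max p 0) b + ((1 + ε - ε / b * min (max p 0) b) * D - U) / n ∈ Icc (-1) (1 + b) := by
  have hn : 1 ≤ n := by linarith [hD.1, hD.2]
  have ht : min (max p 0) b ∈ Icc 0 b := ⟨le_min (le_max_right _ _) hb.le, min_le_right _ _⟩
  have h_demand : (1 + ε - ε / b * min (max p 0) b) * D ∈ Icc 0 n :=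
    one_add_sub_div_mul_mul_mem_of_convex (convex_Icc 0 n) hb ht
      (one_add_mul_mem_Icc hε hε' hD) ⟨hD.1, by linarith [hD.2]⟩
  have h_step := abs_le.1 <|
    abs_sub_div_le_one (zero_lt_one.trans_le hn) h_demand ⟨hU.1, hU.2.trans hn⟩
  exact ⟨by linarith [ht.1, h_step.1], by linarith [ht.2, h_step.2]⟩

end PriceUpdate

/-- Closure of the auxiliary price space `[-1, 1 + b̄]` under the price update
function `f_TF` of A-CEEI-TF (coordinatewise form). -/
theorem stmt8 (n : ℕ) (hn : 1 ≤ n) (bbar : ℝ) (hb : 0 < bbar)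
    (ε : ℝ) (hε : 0 ≤ ε) (hε' : ((n : ℝ) - 1) * (1 + ε) ≤ (n : ℝ))
    (pt : ℝ) (hp1 : -1 ≤ pt) (hp2 : pt ≤ 1 + bbar)
    (D : ℕ) (hD : (D : ℝ) ≤ (n : ℝ) - 1)
    (U : ℝ) (hU : U = 0 ∨ U = 1) :
    -1 ≤ min (max pt 0) bbar +
        ((1 + ε - (ε / bbar) * min (max pt 0) bbar) * (D : ℝ) - U) / (n : ℝ) ∧
      min (max pt 0) bbar +
        ((1 + ε - (ε / bbar) * min (max pt 0) bbar) * (D : ℝ) - U) / (n : ℝ) ≤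
        1 + bbar := by
  exact stmt8_general hb (by linarith) hε' pt ⟨D.cast_nonneg, hD⟩
    (by rcases hU with rfl | rfl <;> simp)
end

section
/- Let n ≥ 1 be a natural number, let b̄ > 0, and let ε ≥ 0. Let p̃ be a real number with −1 ≤ p̃ ≤ 1 + b̄, let t = min(max(p̃, 0), b̄), let D be a natural number and U ∈ {0, 1}, subject to the demand-consistency conditions: not (D ≥ 1 and U = 1), and if t = b̄ then D = 0 and U = 1. If p̃ is a fixed point of the price update, i.e. p̃ = t + ((1 + ε − (ε/b̄)·t)·D − U)/n, then D = 0, and if U = 1 then t = 0. -/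
/-!
At a fixed point the price differs from its truncation `t` by the update increment. A price lies
strictly above its truncation only if `t` is the upper bound, and strictly below only if `t` is the
lower bound, so the sign of the increment locates `t`. Unreciprocated demand would make the
increment positive and hence `t = b̄`, where nobody can afford the agent; under-demand makes it
negative and hence `t = 0`.
-/

section Truncation

variable {α : Type*} [LinearOrder α] {a b x : α}

theorem min_max_eq_right_of_min_max_lt (h : min (max x a) b < x) : min (max x a) b = b :=
  (min_choice _ _).resolve_left fun heq => h.not_ge (heq.symm ▸ le_max_left x a)

theorem min_max_eq_left_of_lt_min_max (hab : a ≤ b) (h : x < min (max x a) b) :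
    min (max x a) b = a := by
  have hxa : x < a := (lt_max_iff.mp (h.trans_le (min_le_left _ _))).resolve_left (lt_irrefl x)
  rw [max_eq_right hxa.le, min_eq_left hab]

end Truncation

section PriceUpdate

variable {K : Type*} [Field K] [LinearOrder K] [IsStrictOrderedRing K]

theorem one_add_sub_div_mul_pos {b ε t : K} (hb : 0 < b) (hε : -1 < ε) (ht : 0 ≤ t) (htb : t ≤ b) :
    0 < 1 + ε - ε / b * t := by
  have hs₀ : 0 ≤ t / b := div_nonneg ht hb.le
  have hs₁ : t / b ≤ 1 := (div_le_one hb).mpr htb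
  -- The coefficient interpolates linearly between `1 + ε` at `t = 0` and `1` at `t = b`.
  have hconvex : 1 + ε - ε / b * t = (1 - t / b) * (1 + ε) + t / b := by ring
  rw [hconvex]
  rcases hs₁.lt_or_eq with hlt | heq
  · exact add_pos_of_pos_of_nonneg (mul_pos (sub_pos.mpr hlt) (by linarith)) hs₀
  · simp [heq]

theorem stmt9_general {n bbar ε pt D U : K} (hn : 0 < n) (hb : 0 < bbar) (hε : -1 < ε)
    (hD : 0 ≤ D) (hDU : D = 0 ∨ U = 0) (hbudget : min (max pt 0) bbar = bbar → D = 0)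
    (hfix : pt = min (max pt 0) bbar +
      ((1 + ε - (ε / bbar) * min (max pt 0) bbar) * D - U) / n) :
    D = 0 ∧ (0 < U → min (max pt 0) bbar = 0) := by
  have hcoeff : 0 < 1 + ε - (ε / bbar) * min (max pt 0) bbar :=
    one_add_sub_div_mul_pos hb hε (le_min (le_max_right _ _) hb.le) (min_le_right _ _)
  have hD₀ : D = 0 := by
    by_contra hne
    have hU₀ : U = 0 := hDU.resolve_left hne
    have hincr : 0 < ((1 + ε - (ε / bbar) * min (max pt 0) bbar) * D - U) / n := by
      rw [hU₀, sub_zero]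
      exact div_pos (mul_pos hcoeff (hD.lt_of_ne' hne)) hn
    exact hne (hbudget (min_max_eq_right_of_min_max_lt (by linarith)))
  refine ⟨hD₀, fun hU => min_max_eq_left_of_lt_min_max hb.le ?_⟩
  have hincr : ((1 + ε - (ε / bbar) * min (max pt 0) bbar) * D - U) / n < 0 := by
    rw [hD₀, mul_zero, zero_sub]
    exact div_neg_of_neg_of_pos (neg_neg_of_pos hU) hn
  linarith

end PriceUpdate

/-- Coordinatewise admissibility of the price update function `f_TF` of A-CEEI-TF:
a fixed point of the update induces relaxed market clearing at the agent, i.e.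
the agent has no unreciprocated demand (`D = 0`) and may be under-demanded
(`U = 1`) only if its truncated price is `0`. -/
theorem stmt9 (n : ℕ) (hn : 1 ≤ n) (bbar : ℝ) (hb : 0 < bbar)
    (ε : ℝ) (hε : 0 ≤ ε)
    (pt : ℝ) (hp1 : -1 ≤ pt) (hp2 : pt ≤ 1 + bbar)
    (D : ℕ) (U : ℝ) (hU : U = 0 ∨ U = 1)
    (hDU : ¬(1 ≤ D ∧ U = 1))
    (hbudget : min (max pt 0) bbar = bbar → D = 0 ∧ U = 1)
    (hfix : pt = min (max pt 0) bbar +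
      ((1 + ε - (ε / bbar) * min (max pt 0) bbar) * (D : ℝ) - U) / (n : ℝ)) :
    D = 0 ∧ (U = 1 → min (max pt 0) bbar = 0) := by
  have hexcl : (D : ℝ) = 0 ∨ U = 0 := by rw [Nat.cast_eq_zero]; grind
  exact (stmt9_general (Nat.cast_pos.mpr hn) hb (by linarith) D.cast_nonneg hexcl
    (fun h => Nat.cast_eq_zero.mpr (hbudget h).1) hfix).imp Nat.cast_eq_zero.mp
    fun ht hU₁ => ht (hU₁ ▸ one_pos)
end

section
/- Let n ≥ 2 be a natural number and let b̄ be a real number with b̄ ≤ 1 + 1/n. Let S be a finite set of indices with 1 ≤ |S| ≤ n − 1, let p assign a nonnegative real price to each element of S, and suppose Σ_{k ∈ S} p(k) ≤ b̄. Then for every real number β ≥ 1 there exists r ∈ S such that Σ_{k ∈ S\{r}} p(k) ≤ β. -/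
/-!
Averaged over `r ∈ S`, the sum over `S \ {r}` is `(1 - 1 / |S|)` times the sum over `S`, so some `r`
does at least as well as this average. The factor absorbs an excess of `1 + 1 / n`, that is
`(1 - 1 / m) * (1 + 1 / n) ≤ 1`, exactly when `m ≤ n + 1`.
-/

open Finset

theorem sum_sum_erase {ι M : Type*} [DecidableEq ι] [AddCommMonoid M] (s : Finset ι) (f : ι → M) :
    ∑ r ∈ s, ∑ k ∈ s.erase r, f k = (#s - 1) • ∑ k ∈ s, f k :=
  calc ∑ r ∈ s, ∑ k ∈ s.erase r, f k
      = ∑ k ∈ s, ∑ _r ∈ s.erase k, f k := sum_comm' fun r k => by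
        simp only [mem_erase, ne_comm, and_assoc, and_left_comm]
    _ = ∑ k ∈ s, (#s - 1) • f k :=
      sum_congr rfl fun k hk => by rw [sum_const, card_erase_of_mem hk]
    _ = (#s - 1) • ∑ k ∈ s, f k := (smul_sum ..).symm

theorem exists_card_nsmul_sum_erase_le {ι M : Type*} [DecidableEq ι] [AddCommMonoid M]
    [LinearOrder M] [IsOrderedCancelAddMonoid M] {s : Finset ι} (hs : s.Nonempty) (f : ι → M) :
    ∃ r ∈ s, #s • ∑ k ∈ s.erase r, f k ≤ (#s - 1) • ∑ k ∈ s, f k := by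
  refine exists_le_of_sum_le hs (le_of_eq ?_)
  calc ∑ r ∈ s, #s • ∑ k ∈ s.erase r, f k
      = #s • ∑ r ∈ s, ∑ k ∈ s.erase r, f k := (smul_sum ..).symm
    _ = #s • (#s - 1) • ∑ k ∈ s, f k := by rw [sum_sum_erase]
    _ = ∑ _r ∈ s, (#s - 1) • ∑ k ∈ s, f k := (sum_const _).symm

theorem one_sub_one_div_mul_one_add_one_div_le_one {K : Type*} [Field K] [LinearOrder K]
    [IsStrictOrderedRing K] {x y : K} (hx : 0 < x) (hy : 0 < y) (h : x ≤ y + 1) :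
    (1 - 1 / x) * (1 + 1 / y) ≤ 1 := by
  have h_eq : (1 - 1 / x) * (1 + 1 / y) = 1 - (y + 1 - x) / (x * y) := by
    field_simp
    ring
  rw [h_eq]
  exact sub_le_self 1 (div_nonneg (sub_nonneg.2 h) (mul_pos hx hy).le)

theorem exists_sum_erase_le_one_sub_one_div_card_mul {ι K : Type*} [DecidableEq ι] [Field K]
    [LinearOrder K] [IsStrictOrderedRing K] {s : Finset ι} (hs : s.Nonempty) (f : ι → K) :
    ∃ r ∈ s, ∑ k ∈ s.erase r, f k ≤ (1 - 1 / (#s : K)) * ∑ k ∈ s, f k := by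
  obtain ⟨r, hr, hle⟩ := exists_card_nsmul_sum_erase_le hs f
  have hcard : (0 : K) < #s := Nat.cast_pos.2 hs.card_pos
  refine ⟨r, hr, le_of_mul_le_mul_left ?_ hcard⟩
  rw [nsmul_eq_mul, nsmul_eq_mul, Nat.cast_pred hs.card_pos] at hle
  rwa [← mul_assoc, mul_sub, mul_one, mul_one_div_cancel hcard.ne']

theorem stmt10_general {ι K : Type*} [DecidableEq ι] [Field K] [LinearOrder K]
    [IsStrictOrderedRing K] {n : ℕ} (hn : 0 < n) {S : Finset ι} (hS : S.Nonempty)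
    (hcard : #S ≤ n + 1) {p : ι → K} {β : K} (hβ : 0 ≤ β)
    (hsum : ∑ k ∈ S, p k ≤ (1 + 1 / (n : K)) * β) :
    ∃ r ∈ S, ∑ k ∈ S.erase r, p k ≤ β := by
  obtain ⟨r, hr, hle⟩ := exists_sum_erase_le_one_sub_one_div_card_mul hS p
  have hone : (1 : K) ≤ #S := Nat.one_le_cast.2 hS.card_pos
  have hfactor : (1 - 1 / (#S : K)) * (1 + 1 / (n : K)) ≤ 1 :=
    one_sub_one_div_mul_one_add_one_div_le_one (zero_lt_one.trans_le hone) (Nat.cast_pos.2 hn)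
      (mod_cast hcard)
  refine ⟨r, hr, ?_⟩
  calc ∑ k ∈ S.erase r, p k
      ≤ (1 - 1 / (#S : K)) * ∑ k ∈ S, p k := hle
    _ ≤ (1 - 1 / (#S : K)) * ((1 + 1 / (n : K)) * β) :=
      mul_le_mul_of_nonneg_left hsum (sub_nonneg.2 (div_le_one_of_le₀ hone (Nat.cast_nonneg _)))
    _ = (1 - 1 / (#S : K)) * (1 + 1 / (n : K)) * β := (mul_assoc _ _ _).symm
    _ ≤ β := mul_le_of_le_one_left hβ hfactor

/-- Key inequality for envy bounded by a single teammate in A-CEEI-TF: if the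
total price of a team `S` of at most `n - 1` agents is within the budget supremum
`b̄ ≤ 1 + 1/n`, then removing some single member `r` makes the team affordable for
any budget `β ≥ 1`. -/
theorem stmt10 (n : ℕ) (hn : 2 ≤ n) (bbar : ℝ) (hbb : bbar ≤ 1 + 1 / (n : ℝ))
    (S : Finset ℕ) (hS1 : 1 ≤ S.card) (hS2 : S.card ≤ n - 1)
    (p : ℕ → ℝ) (hp : ∀ k ∈ S, 0 ≤ p k)
    (hsum : ∑ k ∈ S, p k ≤ bbar)
    (β : ℝ) (hβ : 1 ≤ β) :
    ∃ r ∈ S, ∑ k ∈ S.erase r, p k ≤ β :=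
  stmt10_general (by omega) (card_pos.1 hS1) (by omega) (zero_le_one.trans hβ)
    ((hsum.trans hbb).trans (le_mul_of_one_le_right (by positivity) hβ))
end

section
/- Let N be a finite set of agents with additive separable utilities u : N → N → ℝ satisfying u(i,j) ≥ 0 for all i, j, let 1 ≤ k ≤ k̄ ≤ |N| be team size bounds, let p : N → ℝ be nonnegative prices, and let b ∈ ℝ be a common budget. Let Q be a partition of N into teams each of size in [k, k̄], with T(i) denoting the team containing i. Suppose that for every agent i: (affordability) Σ_{j ∈ T(i)\{i}} p(j) ≤ b, and (demand optimality) for every subset S ⊆ N\{i} with k ≤ |S| + 1 ≤ k̄ and Σ_{j ∈ S} p(j) ≤ b, one has Σ_{j ∈ S} u(i,j) ≤ Σ_{j ∈ T(i)\{i}} u(i,j). Then Q is envy-free: for all agents i and j, Σ_{l ∈ T(j)\{i,j}} u(i,l) ≤ Σ_{l ∈ T(i)\{i}} u(i,l). -/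
/-!
Under equal budgets the teammates of `j` are available to every agent `i` outside the team of `j`,
since swapping `i` for `j` changes neither the size of the team nor the price of the teammates, so
demand optimality excludes envy. Inside a common team, `i` already has every teammate of `j`
other than `i`, and monotonicity of the valuation excludes envy.
-/

section Envy

variable {α M : Type*} [DecidableEq α] [Preorder M]

/-- Envy-freeness of the team assignment `T`, where `v i S` is the value to agent `i` of the set
`S` of teammates: replacing `j` by `i` in the team of `j` is never better for `i`. The inner erasure
removes `j`; the outer one matters only if `i` and `j` share a team. -/
def IsEnvyFree (v : α → Finset α → M) (T : α → Finset α) : Prop :=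
  ∀ i j, v i (((T j).erase j).erase i) ≤ v i ((T i).erase i)

/-- The teammates of each agent form a most-preferred element of the budget set `B`, which is
shared by all agents. The agent is not counted among their own teammates. -/
structure IsDemandAssignment (B : Set (Finset α)) (v : α → Finset α → M) (T : α → Finset α) :
    Prop where
  erase_mem : ∀ i, (T i).erase i ∈ B
  le_of_mem : ∀ i, ∀ S ∈ B, i ∉ S → v i S ≤ v i ((T i).erase i)

variable {B : Set (Finset α)} {v : α → Finset α → M} {T : α → Finset α}

theorem IsDemandAssignment.erase_erase_le_of_notMem (hT : IsDemandAssignment B v T) {i j : α}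
    (hij : i ∉ T j) : v i (((T j).erase j).erase i) ≤ v i ((T i).erase i) := by
  have hi : i ∉ (T j).erase j := mt Finset.mem_of_mem_erase hij
  rw [Finset.erase_eq_of_notMem hi]
  exact hT.le_of_mem i _ (hT.erase_mem j) hi

theorem stmt11_general (hv : ∀ i, Monotone (v i)) (hpart : ∀ i j, j ∈ T i → T j = T i)
    (hT : IsDemandAssignment B v T) : IsEnvyFree v T := by
  intro i j
  by_cases hij : i ∈ T j
  · rw [hpart j i hij]
    exact hv i (Finset.erase_subset_erase i (Finset.erase_subset j (T j)))
  · exact hT.erase_erase_le_of_notMem hij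

end Envy

section BudgetSet

variable {α R : Type*} [AddCommMonoid R] [LE R]

/-- The sets of teammates that an agent with budget `b` can buy at prices `p` to form a team of
size between `k` and `kbar`. The agent is not a member of the set, whence the `+ 1`. -/
def budgetSet (k kbar : ℕ) (p : α → R) (b : R) : Set (Finset α) :=
  {S | k ≤ S.card + 1 ∧ S.card + 1 ≤ kbar ∧ ∑ j ∈ S, p j ≤ b}

theorem erase_mem_budgetSet [DecidableEq α] {k kbar : ℕ} {p : α → R} {b : R} {s : Finset α} {i : α}
    (hi : i ∈ s) (hsize : k ≤ s.card ∧ s.card ≤ kbar) (hafford : ∑ j ∈ s.erase i, p j ≤ b) :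
    s.erase i ∈ budgetSet k kbar p b := by
  have hcard : (s.erase i).card + 1 = s.card := Finset.card_erase_add_one hi
  exact ⟨hcard ▸ hsize.1, hcard ▸ hsize.2, hafford⟩

theorem isDemandAssignment_budgetSet [DecidableEq α] {M : Type*} [Preorder M]
    {k kbar : ℕ} {p : α → R} {b : R} {v : α → Finset α → M} {T : α → Finset α}
    (hmem : ∀ i, i ∈ T i) (hsize : ∀ i, k ≤ (T i).card ∧ (T i).card ≤ kbar)
    (hafford : ∀ i, ∑ j ∈ (T i).erase i, p j ≤ b)
    (hopt : ∀ i (S : Finset α), i ∉ S → k ≤ S.card + 1 → S.card + 1 ≤ kbar →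
      ∑ j ∈ S, p j ≤ b → v i S ≤ v i ((T i).erase i)) :
    IsDemandAssignment (budgetSet k kbar p b) v T where
  erase_mem i := erase_mem_budgetSet (hmem i) (hsize i) (hafford i)
  le_of_mem i S := fun ⟨hk, hkbar, hp⟩ hi => hopt i S hi hk hkbar hp

end BudgetSet

/-- A-CEEI-TF with exactly equal budgets and exact market clearing (same induced
partition at each stage) is envy-free: if each agent's team is affordable and is
its most-preferred affordable team of legal size, then no agent envies another.
The partition is encoded by `T : α → Finset α` assigning to each agent its team. -/
theorem stmt11 {α : Type*} [Fintype α] [DecidableEq α]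
    (u : α → α → ℝ) (hu : ∀ i j, 0 ≤ u i j)
    (k kbar : ℕ) (hk : 1 ≤ k) (hkk : k ≤ kbar) (hkn : kbar ≤ Fintype.card α)
    (p : α → ℝ) (hp : ∀ i, 0 ≤ p i) (b : ℝ)
    (T : α → Finset α)
    (hmem : ∀ i, i ∈ T i)
    (hpart : ∀ i j, j ∈ T i → T j = T i)
    (hsize : ∀ i, k ≤ (T i).card ∧ (T i).card ≤ kbar)
    (hafford : ∀ i, ∑ j ∈ (T i).erase i, p j ≤ b)
    (hopt : ∀ i (S : Finset α), i ∉ S → k ≤ S.card + 1 → S.card + 1 ≤ kbar →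
      ∑ j ∈ S, p j ≤ b → ∑ j ∈ S, u i j ≤ ∑ j ∈ (T i).erase i, u i j) :
    ∀ i j : α, ∑ l ∈ ((T j).erase j).erase i, u i l ≤ ∑ l ∈ (T i).erase i, u i l := by
  exact stmt11_general (v := fun i S => ∑ l ∈ S, u i l)
    (fun i => Finset.sum_mono_set_of_nonneg (hu i)) hpart
    (isDemandAssignment_budgetSet hmem hsize hafford hopt)
end
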